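/- Let q be a prime power, n ≥ 1, and let V = F_q^{2n} be endowed with a nondegenerate alternating bilinear form (·|·), with isometry group Sp(V) = Sp_{2n}(q). If T_1, T_2 are two independent uniformly random symplectic transvections, then the probability that the fixed point subspace ker(T_1T_2 − I) has codimension e in V equals: (q^{2n} − q)/(q^{2n} − 1) if e = 2; (q − 2)/(q^{2n} − 1) if e = 1; and 1/(q^{2n} − 1) if e = 0. -/

import Mathlib

/-!
Parametrise transvections by a scalar and the line `⟨v⟩` of their centre, fixing a representative
of each line; there are `(q - 1) * |ℙ V| = q ^ (2n) - 1` of them. Two transvections with distinct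
centres `⟨v⟩ ≠ ⟨w⟩` have a product fixing exactly `⟨v, w⟩^⊥`, while those with a common centre
compose by adding their scalars. So once `T₁` is fixed, the product has fixed codimension `0` for
one choice of `T₂`, codimension `1` for the `q - 2` other transvections with the same centre, and
codimension `2` for all remaining ones, that is, for `(q ^ (2n) - 1) - (q - 1)` of them.
-/

noncomputable section

/-- The subgroup of `GL_m(E)` consisting of the invertible matrices preserving the
form `B` on `E^m`. -/
def formIsometry {E : Type} [Field E] {m : ℕ} (B : (Fin m → E) → (Fin m → E) → E) :
    Subgroup (Matrix (Fin m) (Fin m) E)ˣ where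
  carrier := {g | ∀ x y, B ((g : Matrix (Fin m) (Fin m) E).mulVec x)
    ((g : Matrix (Fin m) (Fin m) E).mulVec y) = B x y}
  one_mem' := by
    intro x y
    simp [Matrix.one_mulVec]
  mul_mem' := by
    intro a b ha hb x y
    simp only [Units.val_mul, ← Matrix.mulVec_mulVec]
    rw [ha, hb]
  inv_mem' := by
    intro g hg x y
    have := hg ((g⁻¹ : (Matrix (Fin m) (Fin m) E)ˣ).val.mulVec x)
      ((g⁻¹ : (Matrix (Fin m) (Fin m) E)ˣ).val.mulVec y)
    rw [Matrix.mulVec_mulVec, Matrix.mulVec_mulVec, ← Units.val_mul, mul_inv_cancel,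
      Units.val_one, Matrix.one_mulVec, Matrix.one_mulVec] at this
    exact this.symm

instance {E : Type} [Field E] [Fintype E] {m : ℕ}
    (B : (Fin m → E) → (Fin m → E) → E) : Fintype ↥(formIsometry B) :=
  Fintype.ofFinite _

/-- The dimension of the fixed space `ker(g−1)` of `g ∈ GL_m(E)` acting on `E^m`. -/
def fixdim {E : Type} [Field E] {m : ℕ} (g : (Matrix (Fin m) (Fin m) E)ˣ) : ℕ :=
  Module.finrank E (LinearMap.ker (Matrix.toLin' ((g : Matrix (Fin m) (Fin m) E) - 1)))

/-- `g` is a symplectic transvection with respect to the alternating form `B`: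
`g : x ↦ x + α(v|x)v` for some `α ∈ F^×` and `0 ≠ v`. -/
def IsSympTransvection {F : Type} [Field F] {m : ℕ}
    (B : (Fin m → F) → (Fin m → F) → F) (g : (Matrix (Fin m) (Fin m) F)ˣ) : Prop :=
  ∃ α : F, α ≠ 0 ∧ ∃ v : Fin m → F, v ≠ 0 ∧
    ∀ x, (g : Matrix (Fin m) (Fin m) F).mulVec x = x + (α * B v x) • v

open Module LinearMap
open scoped LinearAlgebra.Projectivization

theorem card_pairs_eq_mul {G : Type*} [Finite G] {P : G → Prop} {Q : G → G → Prop} {c : ℕ}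
    (h : ∀ S, P S → Nat.card {T : G // P T ∧ Q S T} = c) :
    Nat.card {p : G × G // P p.1 ∧ P p.2 ∧ Q p.1 p.2} = Nat.card {S : G // P S} * c := by
  have := Fintype.ofFinite {S : G // P S}
  let e : {p : G × G // P p.1 ∧ P p.2 ∧ Q p.1 p.2} ≃
      Σ S : {S : G // P S}, {T : G // P T ∧ Q S.1 T} :=
    { toFun p := ⟨⟨p.1.1, p.2.1⟩, p.1.2, p.2.2⟩
      invFun s := ⟨(s.1, s.2), s.1.2, s.2.2⟩ }
  rw [Nat.card_congr e, Nat.card_sigma, Fintype.sum_congr _ _ fun S : {S // P S} => h S.1 S.2,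
    Finset.sum_const, Finset.card_univ, smul_eq_mul, Nat.card_eq_fintype_card]

section FixedSubmodule

variable {R V : Type*} [Ring R] [AddCommGroup V] [Module R V]

theorem fixedSubmodule_transvection [IsDomain R] [IsTorsionFree R V] (f : Dual R V) {v : V}
    (hv : v ≠ 0) : (transvection f v).fixedSubmodule = ker f := by
  ext x
  simp [transvection.apply, hv]

theorem fixedSubmodule_transvection_comp_transvection (f g : Dual R V) {v w : V}
    (h : LinearIndependent R ![v, w]) :
    (transvection f v ∘ₗ transvection g w).fixedSubmodule = ker f ⊓ ker g := by
  ext x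
  rw [mem_fixedSubmodule_iff, comp_apply, transvection.apply, transvection.apply,
    Submodule.mem_inf, mem_ker, mem_ker, add_assoc, add_eq_left]
  constructor
  · intro hx
    obtain ⟨hg, hf⟩ := LinearIndependent.pair_iff.1 (LinearIndependent.pair_symm_iff.1 h) _ _ hx
    exact ⟨by simpa [hg] using hf, hg⟩
  · rintro ⟨hf, hg⟩
    simp [hf, hg]

end FixedSubmodule

section FixedCodim

variable {K V : Type*} [Field K] [AddCommGroup V] [Module K V]

theorem finrank_quotient_iInf_ker {ι : Type*} [Fintype ι] {f : ι → Dual K V}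
    (hf : LinearIndependent K f) : finrank K (V ⧸ ⨅ i, ker (f i)) = Fintype.card ι := by
  let W := Submodule.span K (Set.range f)
  have hW : ⨅ i, ker (f i) = W.dualCoannihilator := by
    rw [SetLike.ext'_iff, Submodule.coe_dualCoannihilator_span]
    ext x
    simp
  have : FiniteDimensional K W := FiniteDimensional.span_of_finite K (Set.finite_range f)
  calc finrank K (V ⧸ ⨅ i, ker (f i)) = finrank K (V ⧸ W.dualCoannihilator) := by rw [hW]
    _ = finrank K (Dual K W) :=
      (LinearEquiv.ofBijective _ (Subspace.quotDualCoannihilatorToDual_bijective W)).finrank_eq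
    _ = finrank K W := Subspace.dual_finrank_eq (V := W)
    _ = Fintype.card ι := finrank_span_eq_card hf

/-- The codimension of the space of fixed vectors of an endomorphism, taken as the dimension of the
quotient so that it makes sense without truncated subtraction. -/
def fixedCodim (f : V →ₗ[K] V) : ℕ :=
  finrank K (V ⧸ f.fixedSubmodule)

theorem fixedCodim_id : fixedCodim (.id : V →ₗ[K] V) = 0 := by
  have : Subsingleton (V ⧸ (.id : V →ₗ[K] V).fixedSubmodule) :=
    Submodule.Quotient.subsingleton_iff.2 (fixedSubmodule_eq_top_iff.2 rfl)
  exact finrank_zero_of_subsingleton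

theorem fixedCodim_transvection {f : Dual K V} (hf : f ≠ 0) {v : V} (hv : v ≠ 0) :
    fixedCodim (transvection f v) = 1 := by
  rw [fixedCodim, fixedSubmodule_transvection f hv, ← ciInf_const (ι := Unit) (a := ker f),
    finrank_quotient_iInf_ker (f := fun _ : Unit => f) (linearIndependent_unique_iff.2 hf)]
  rfl

theorem fixedCodim_transvection_comp_transvection {f g : Dual K V}
    (hfg : LinearIndependent K ![f, g]) {v w : V} (hvw : LinearIndependent K ![v, w]) :
    fixedCodim (transvection f v ∘ₗ transvection g w) = 2 := by
  have hker : ker f ⊓ ker g = ⨅ i, ker (![f, g] i) := by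
    ext x
    simp [Fin.forall_fin_two]
  rw [fixedCodim, fixedSubmodule_transvection_comp_transvection f g hvw, hker,
    finrank_quotient_iInf_ker hfg, Fintype.card_fin]

end FixedCodim

section SympTransvection

variable {K V : Type*} [Field K] [AddCommGroup V] [Module K V] {B : LinearMap.BilinForm K V}

/-- The symplectic transvection `x ↦ x + α(v|x)v`, as an endomorphism. -/
def sympTransvection (B : LinearMap.BilinForm K V) (α : K) (v : V) : V →ₗ[K] V :=
  transvection (α • B v) v

theorem sympTransvection_apply (α : K) (v x : V) :
    sympTransvection B α v x = x + (α * B v x) • v := rfl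

theorem sympTransvection_zero (v : V) : sympTransvection B 0 v = .id := by
  rw [sympTransvection, zero_smul, transvection.of_left_eq_zero]

theorem sympTransvection_smul (α c : K) (v : V) :
    sympTransvection B α (c • v) = sympTransvection B (α * c ^ 2) v := by
  ext x
  simp only [sympTransvection_apply, map_smul, LinearMap.smul_apply, smul_eq_mul, smul_smul]
  ring_nf

theorem sympTransvection_comp_self (halt : B.IsAlt) (α β : K) (v : V) :
    sympTransvection B α v ∘ₗ sympTransvection B β v = sympTransvection B (α + β) v := by
  rw [sympTransvection, sympTransvection, transvection.comp_of_right_eq (by simp [halt v]),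
    ← add_smul, sympTransvection]

theorem apply_sympTransvection_sympTransvection (halt : B.IsAlt) (α : K) (v x y : V) :
    B (sympTransvection B α v x) (sympTransvection B α v y) = B x y := by
  simp only [sympTransvection_apply, map_add, map_smul, LinearMap.add_apply, LinearMap.smul_apply,
    smul_eq_mul, halt.self_eq_zero v, ← halt.neg_eq v x]
  ring

theorem fixedCodim_sympTransvection (hsep : B.SeparatingLeft) {α : K} (hα : α ≠ 0) {v : V}
    (hv : v ≠ 0) : fixedCodim (sympTransvection B α v) = 1 :=
  have hB : Function.Injective B := ker_eq_bot.1 (separatingLeft_iff_ker_eq_bot.1 hsep)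
  fixedCodim_transvection (smul_ne_zero hα ((map_ne_zero_iff B hB).2 hv)) hv

theorem fixedCodim_sympTransvection_comp_sympTransvection (hsep : B.SeparatingLeft) {α β : K}
    (hα : α ≠ 0) (hβ : β ≠ 0) {v w : V} (h : LinearIndependent K ![v, w]) :
    fixedCodim (sympTransvection B α v ∘ₗ sympTransvection B β w) = 2 := by
  refine fixedCodim_transvection_comp_transvection ?_ h
  have hcomp : B ∘ ![v, w] = ![B v, B w] := by simp [funext_iff, Fin.forall_fin_two]
  have hBvw : LinearIndependent K ![B v, B w] :=
    hcomp ▸ h.map' B (separatingLeft_iff_ker_eq_bot.1 hsep)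
  exact (LinearIndependent.pair_smul_smul_iff hα.isUnit hβ.isUnit).2 hBvw

/-- The symplectic transvection with given scalar and given centre `⟨v⟩`. Since
`x ↦ x + α(v|x)v` depends on `v` and not only on its line, `v` is the chosen representative. -/
def lineTransvection (B : LinearMap.BilinForm K V) (p : Kˣ × ℙ K V) : V →ₗ[K] V :=
  sympTransvection B p.1 p.2.rep

theorem exists_lineTransvection_eq {α : K} (hα : α ≠ 0) {v : V} (hv : v ≠ 0) :
    ∃ p, lineTransvection B p = sympTransvection B α v := by
  obtain ⟨a, ha⟩ := Projectivization.exists_smul_eq_mk_rep K v hv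
  refine ⟨(.mk0 α hα * (a ^ 2)⁻¹, .mk K v hv), ?_⟩
  rw [lineTransvection, ← ha, Units.smul_def, sympTransvection_smul]
  simp

open Classical in
theorem fixedCodim_lineTransvection_comp (halt : B.IsAlt) (hsep : B.SeparatingLeft)
    (p r : Kˣ × ℙ K V) :
    fixedCodim (lineTransvection B p ∘ₗ lineTransvection B r) =
      if r.2 = p.2 then if r.1 = -p.1 then 0 else 1 else 2 := by
  unfold lineTransvection
  split_ifs with hline hscalar
  · rw [hline, hscalar, sympTransvection_comp_self halt, Units.val_neg, add_neg_cancel,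
      sympTransvection_zero, fixedCodim_id]
  · have hsum : (p.1 + r.1 : K) ≠ 0 := fun h =>
      hscalar (Units.ext (by rw [Units.val_neg]; exact eq_neg_of_add_eq_zero_right h))
    rw [hline, sympTransvection_comp_self halt,
      fixedCodim_sympTransvection hsep hsum p.2.rep_nonzero]
  · exact fixedCodim_sympTransvection_comp_sympTransvection hsep p.1.ne_zero r.1.ne_zero
      (Projectivization.linearIndependent_pair_iff_ne.2 (Ne.symm hline))

theorem lineTransvection_injective (halt : B.IsAlt) (hsep : B.SeparatingLeft) :
    Function.Injective (lineTransvection B) := by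
  classical
  intro p r h
  have hinv : fixedCodim (lineTransvection B p ∘ₗ lineTransvection B (-r.1, r.2)) = 0 := by
    rw [h, fixedCodim_lineTransvection_comp halt hsep, if_pos rfl, if_pos rfl]
  rw [fixedCodim_lineTransvection_comp halt hsep] at hinv
  obtain ⟨hline, hscalar⟩ : r.2 = p.2 ∧ -r.1 = -p.1 := by grind
  exact Prod.ext (neg_injective hscalar).symm hline.symm

theorem setOf_fixedCodim_lineTransvection_comp_eq_zero (halt : B.IsAlt) (hsep : B.SeparatingLeft)
    (p : Kˣ × ℙ K V) :
    {r | fixedCodim (lineTransvection B p ∘ₗ lineTransvection B r) = 0} = {-p.1} ×ˢ {p.2} := by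
  ext r
  simp only [fixedCodim_lineTransvection_comp halt hsep, Set.mem_ofPred_eq, Set.mem_prod,
    Set.mem_singleton_iff]
  grind

theorem setOf_fixedCodim_lineTransvection_comp_eq_one (halt : B.IsAlt) (hsep : B.SeparatingLeft)
    (p : Kˣ × ℙ K V) :
    {r | fixedCodim (lineTransvection B p ∘ₗ lineTransvection B r) = 1} = {-p.1}ᶜ ×ˢ {p.2} := by
  ext r
  simp only [fixedCodim_lineTransvection_comp halt hsep, Set.mem_ofPred_eq, Set.mem_prod,
    Set.mem_singleton_iff, Set.mem_compl_iff]
  grind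

theorem setOf_fixedCodim_lineTransvection_comp_eq_two (halt : B.IsAlt) (hsep : B.SeparatingLeft)
    (p : Kˣ × ℙ K V) :
    {r | fixedCodim (lineTransvection B p ∘ₗ lineTransvection B r) = 2} = Set.univ ×ˢ {p.2}ᶜ := by
  ext r
  simp only [fixedCodim_lineTransvection_comp halt hsep, Set.mem_ofPred_eq, Set.mem_prod,
    Set.mem_singleton_iff, Set.mem_compl_iff, Set.mem_univ]
  grind

end SympTransvection

section Card

variable {K V : Type*} [Field K] [AddCommGroup V] [Module K V]

theorem card_units_prod_projectivization : Nat.card (Kˣ × ℙ K V) = Nat.card V - 1 := by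
  rw [Nat.card_prod, Nat.card_units, mul_comm, Projectivization.card K V]

variable {B : LinearMap.BilinForm K V}

theorem ncard_fixedCodim_lineTransvection_comp_eq_zero (halt : B.IsAlt) (hsep : B.SeparatingLeft)
    (p : Kˣ × ℙ K V) :
    {r | fixedCodim (lineTransvection B p ∘ₗ lineTransvection B r) = 0}.ncard = 1 := by
  rw [setOf_fixedCodim_lineTransvection_comp_eq_zero halt hsep, Set.ncard_prod, Set.ncard_singleton,
    Set.ncard_singleton]

theorem ncard_fixedCodim_lineTransvection_comp_eq_one [Finite K] (halt : B.IsAlt)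
    (hsep : B.SeparatingLeft) (p : Kˣ × ℙ K V) :
    {r | fixedCodim (lineTransvection B p ∘ₗ lineTransvection B r) = 1}.ncard =
      Nat.card K - 2 := by
  rw [setOf_fixedCodim_lineTransvection_comp_eq_one halt hsep, Set.ncard_prod, Set.ncard_compl,
    Set.ncard_singleton, Set.ncard_singleton, Nat.card_units, mul_one, Nat.sub_sub]

theorem ncard_fixedCodim_lineTransvection_comp_eq_two [Finite K] [Finite V] (halt : B.IsAlt)
    (hsep : B.SeparatingLeft) (p : Kˣ × ℙ K V) :
    {r | fixedCodim (lineTransvection B p ∘ₗ lineTransvection B r) = 2}.ncard =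
      Nat.card V - Nat.card K := by
  rw [setOf_fixedCodim_lineTransvection_comp_eq_two halt hsep, Set.ncard_prod, Set.ncard_compl,
    Set.ncard_univ, Set.ncard_singleton, Nat.mul_sub_one, ← Nat.card_prod,
    card_units_prod_projectivization, Nat.card_units]
  have := Nat.card_pos (α := K)
  omega

end Card

section Matrix

variable {F : Type} [Field F] {m : ℕ} {B : LinearMap.BilinForm F (Fin m → F)}

theorem fixdim_add_fixedCodim (g : (Matrix (Fin m) (Fin m) F)ˣ) :
    fixdim g + fixedCodim (Matrix.toLin' (g : Matrix (Fin m) (Fin m) F)) = m := by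
  rw [fixdim, map_sub, Matrix.toLin'_one, ← fixedSubmodule_eq_ker, fixedCodim, add_comm,
    Submodule.finrank_quotient_add_finrank, finrank_fin_fun]

/-- The symplectic transvection `lineTransvection B p` as an element of the isometry group. -/
def lineIsometry (halt : B.IsAlt) (p : Fˣ × ℙ F (Fin m → F)) : formIsometry (fun x y => B x y) :=
  ⟨{ val := toMatrix' (sympTransvection B p.1 p.2.rep)
     inv := toMatrix' (sympTransvection B (-p.1) p.2.rep)
     val_inv := by
      rw [← toMatrix'_comp, sympTransvection_comp_self halt, add_neg_cancel, sympTransvection_zero,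
        toMatrix'_id]
     inv_val := by
      rw [← toMatrix'_comp, sympTransvection_comp_self halt, neg_add_cancel, sympTransvection_zero,
        toMatrix'_id] },
    fun x y => by
      simpa only [toMatrix'_mulVec] using apply_sympTransvection_sympTransvection halt _ _ x y⟩

theorem toLin'_lineIsometry (halt : B.IsAlt) (p : Fˣ × ℙ F (Fin m → F)) :
    Matrix.toLin' (lineIsometry halt p).1.1 = lineTransvection B p :=
  Matrix.toLin'_toMatrix' _

theorem lineIsometry_injective (halt : B.IsAlt) (hsep : B.SeparatingLeft) :
    Function.Injective (lineIsometry halt) := fun p r h =>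
  lineTransvection_injective halt hsep <| by
    rw [← toLin'_lineIsometry halt, h, toLin'_lineIsometry]

theorem isSympTransvection_iff_exists_lineIsometry (halt : B.IsAlt)
    (T : formIsometry (fun x y => B x y)) :
    IsSympTransvection (fun x y => B x y) T.1 ↔ ∃ p, lineIsometry halt p = T := by
  constructor
  · rintro ⟨α, hα, v, hv, hT⟩
    obtain ⟨p, hp⟩ := exists_lineTransvection_eq (B := B) hα hv
    refine ⟨p, Subtype.ext (Units.ext (Matrix.toLin'.injective ?_))⟩
    rw [toLin'_lineIsometry, hp]
    exact LinearMap.ext fun x => (hT x).symm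
  · rintro ⟨p, rfl⟩
    refine ⟨p.1, p.1.ne_zero, p.2.rep, p.2.rep_nonzero, fun x => ?_⟩
    rw [← Matrix.toLin'_apply, toLin'_lineIsometry]
    rfl

/-- The parametrisation of the symplectic transvections by scalar and centre. -/
def lineIsometryEquiv (halt : B.IsAlt) (hsep : B.SeparatingLeft) :
    Fˣ × ℙ F (Fin m → F) ≃
      {T : formIsometry (fun x y => B x y) // IsSympTransvection (fun x y => B x y) T.1} :=
  (Equiv.ofInjective _ (lineIsometry_injective halt hsep)).trans <|
    Equiv.subtypeEquivRight fun T => (isSympTransvection_iff_exists_lineIsometry halt T).symm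

theorem fixdim_lineIsometry_mul_eq_iff (halt : B.IsAlt) (p r : Fˣ × ℙ F (Fin m → F)) {e : ℕ}
    (he : e ≤ m) : fixdim (lineIsometry halt p * lineIsometry halt r).1 = m - e ↔
      fixedCodim (lineTransvection B p ∘ₗ lineTransvection B r) = e := by
  have h := fixdim_add_fixedCodim (lineIsometry halt p * lineIsometry halt r).1
  rw [Subgroup.coe_mul, Units.val_mul, Matrix.toLin'_mul, toLin'_lineIsometry,
    toLin'_lineIsometry] at h
  rw [Subgroup.coe_mul]
  omega

theorem card_isSympTransvection_fixdim_mul_eq (halt : B.IsAlt) (hsep : B.SeparatingLeft)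
    (p : Fˣ × ℙ F (Fin m → F)) {e : ℕ} (he : e ≤ m) :
    Nat.card {T : formIsometry (fun x y => B x y) //
      IsSympTransvection (fun x y => B x y) T.1 ∧ fixdim (lineIsometry halt p * T).1 = m - e} =
    {r | fixedCodim (lineTransvection B p ∘ₗ lineTransvection B r) = e}.ncard := by
  rw [← Nat.card_coe_set_eq]
  refine (Nat.card_congr ?_).symm
  exact ((lineIsometryEquiv halt hsep).subtypeEquiv fun r =>
    (fixdim_lineIsometry_mul_eq_iff halt p r he).symm).trans (Equiv.subtypeSubtypeEquivSubtypeInter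
      _ fun T => fixdim (lineIsometry halt p * T).1 = m - e)

variable [Fintype F]

theorem card_isSympTransvection (halt : B.IsAlt) (hsep : B.SeparatingLeft) :
    Nat.card {T : formIsometry (fun x y => B x y) // IsSympTransvection (fun x y => B x y) T.1} =
      Fintype.card F ^ m - 1 := by
  rw [← Nat.card_congr (lineIsometryEquiv halt hsep), card_units_prod_projectivization,
    Nat.card_fun, Nat.card_fin, Nat.card_eq_fintype_card]

theorem card_pairs_div_card_sq (halt : B.IsAlt) (hsep : B.SeparatingLeft) {e c : ℕ} (he : e ≤ m)
    (hc : ∀ p, {r | fixedCodim (lineTransvection B p ∘ₗ lineTransvection B r) = e}.ncard = c) :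
    (Nat.card {p : formIsometry (fun x y => B x y) × formIsometry (fun x y => B x y) //
        IsSympTransvection (fun x y => B x y) p.1.1 ∧
        IsSympTransvection (fun x y => B x y) p.2.1 ∧ fixdim (p.1 * p.2).1 = m - e} : ℝ) /
      (Nat.card {T : formIsometry (fun x y => B x y) //
        IsSympTransvection (fun x y => B x y) T.1} : ℝ) ^ 2 =
      c / ((Fintype.card F : ℝ) ^ m - 1) := by
  rw [card_pairs_eq_mul (P := fun T : formIsometry (fun x y => B x y) =>
      IsSympTransvection (fun x y => B x y) T.1) (Q := fun S T => fixdim (S * T).1 = m - e)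
      (c := c) fun S hS => ?_, card_isSympTransvection halt hsep]
  · rw [Nat.cast_mul, Nat.cast_sub (Nat.one_le_pow _ _ Fintype.card_pos)]
    push_cast
    field_simp
  · obtain ⟨p, rfl⟩ := (isSympTransvection_iff_exists_lineIsometry halt S).1 hS
    rw [card_isSympTransvection_fixdim_mul_eq halt hsep p he, hc]

end Matrix

/-- **Theorem (product of two transvections in `Sp_{2n}(q)`).**  Let `V = F_q^{2n}`,
`n ≥ 1`, carry a nondegenerate alternating bilinear form `B` with isometry group
`Sp(V) = Sp_{2n}(q)`.  The probability that the product of two independent uniformly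
random symplectic transvections has fixed point subspace of codimension `e` equals
`(q^{2n} − q)/(q^{2n} − 1)` if `e = 2`, `(q − 2)/(q^{2n} − 1)` if `e = 1`, and
`1/(q^{2n} − 1)` if `e = 0`. -/
theorem sp_transvection_product_probabilities {F : Type} [Field F] [Fintype F]
    {q n : ℕ} (hq : Fintype.card F = q) (hn : 1 ≤ n)
    (B : (Fin (2 * n) → F) → (Fin (2 * n) → F) → F)
    (hadd₁ : ∀ x x' y, B (x + x') y = B x y + B x' y)
    (hsmul₁ : ∀ (a : F) (x y : Fin (2 * n) → F), B (a • x) y = a * B x y)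
    (hadd₂ : ∀ x y y', B x (y + y') = B x y + B x y')
    (hsmul₂ : ∀ (a : F) (x y : Fin (2 * n) → F), B x (a • y) = a * B x y)
    (halt : ∀ x, B x x = 0)
    (hnd : ∀ x, (∀ y, B x y = 0) → x = 0) :
    ((Nat.card {p : ↥(formIsometry B) × ↥(formIsometry B) //
        IsSympTransvection B (p.1 : (Matrix (Fin (2 * n)) (Fin (2 * n)) F)ˣ) ∧
        IsSympTransvection B (p.2 : (Matrix (Fin (2 * n)) (Fin (2 * n)) F)ˣ) ∧
        fixdim ((p.1 * p.2 : ↥(formIsometry B)) : (Matrix (Fin (2 * n)) (Fin (2 * n)) F)ˣ) =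
          2 * n - 2} : ℝ) /
      (Nat.card {T : ↥(formIsometry B) //
        IsSympTransvection B (T : (Matrix (Fin (2 * n)) (Fin (2 * n)) F)ˣ)} : ℝ) ^ 2 =
      ((q : ℝ) ^ (2 * n) - (q : ℝ)) / ((q : ℝ) ^ (2 * n) - 1)) ∧
    ((Nat.card {p : ↥(formIsometry B) × ↥(formIsometry B) //
        IsSympTransvection B (p.1 : (Matrix (Fin (2 * n)) (Fin (2 * n)) F)ˣ) ∧
        IsSympTransvection B (p.2 : (Matrix (Fin (2 * n)) (Fin (2 * n)) F)ˣ) ∧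
        fixdim ((p.1 * p.2 : ↥(formIsometry B)) : (Matrix (Fin (2 * n)) (Fin (2 * n)) F)ˣ) =
          2 * n - 1} : ℝ) /
      (Nat.card {T : ↥(formIsometry B) //
        IsSympTransvection B (T : (Matrix (Fin (2 * n)) (Fin (2 * n)) F)ˣ)} : ℝ) ^ 2 =
      ((q : ℝ) - 2) / ((q : ℝ) ^ (2 * n) - 1)) ∧
    ((Nat.card {p : ↥(formIsometry B) × ↥(formIsometry B) //
        IsSympTransvection B (p.1 : (Matrix (Fin (2 * n)) (Fin (2 * n)) F)ˣ) ∧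
        IsSympTransvection B (p.2 : (Matrix (Fin (2 * n)) (Fin (2 * n)) F)ˣ) ∧
        fixdim ((p.1 * p.2 : ↥(formIsometry B)) : (Matrix (Fin (2 * n)) (Fin (2 * n)) F)ˣ) =
          2 * n - 0} : ℝ) /
      (Nat.card {T : ↥(formIsometry B) //
        IsSympTransvection B (T : (Matrix (Fin (2 * n)) (Fin (2 * n)) F)ˣ)} : ℝ) ^ 2 =
      1 / ((q : ℝ) ^ (2 * n) - 1)) := by
  obtain ⟨B, rfl⟩ : ∃ B' : LinearMap.BilinForm F (Fin (2 * n) → F), (fun x y => B' x y) = B :=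
    ⟨mk₂ F B hadd₁ hsmul₁ hadd₂ hsmul₂, rfl⟩
  have hq2 : 2 ≤ q := hq ▸ Fintype.one_lt_card
  have hqpow : q ≤ q ^ (2 * n) := Nat.le_self_pow (by omega) q
  have hcardF : Nat.card F = q := by rw [Nat.card_eq_fintype_card, hq]
  have hcardV : Nat.card (Fin (2 * n) → F) = q ^ (2 * n) := by
    rw [Nat.card_fun, Nat.card_fin, hcardF]
  refine ⟨?_, ?_, ?_⟩
  · rw [card_pairs_div_card_sq halt hnd (by omega)
      (ncard_fixedCodim_lineTransvection_comp_eq_two halt hnd), hq, hcardV, hcardF,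
      Nat.cast_sub hqpow, Nat.cast_pow]
  · rw [card_pairs_div_card_sq halt hnd (by omega)
      (ncard_fixedCodim_lineTransvection_comp_eq_one halt hnd), hq, hcardF, Nat.cast_sub hq2,
      Nat.cast_two]
  · rw [card_pairs_div_card_sq halt hnd (Nat.zero_le _)
      (ncard_fixedCodim_lineTransvection_comp_eq_zero halt hnd), hq, Nat.cast_one]
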